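/- Let ρ > 0, let ψ : ℝ^d → ℝ be differentiable and ρ-strongly convex, let L ≥ 0, let g : ℝ^d → ℝ be L-Lipschitz, let f : ℝ^d → ℝ be measurable with 0 < ∫_{ℝ^d} e^{−(f+g)(x)} dx < ∞, and let λ > 0. Let π and π_λ^ψ be the probability measures with Lebesgue densities proportional to e^{−(f+g)} and e^{−(f + env_{λ,g}^ψ)} respectively, where env_{λ,g}^ψ denotes either the left or the right Bregman–Moreau envelope of g. Then for every measurable h : ℝ^d → ℝ that is integrable with respect to both π and π_λ^ψ, |E_{π_λ^ψ}[h] − E_π[h]| ≤ (e^{λL²/ρ} − 1) · min{ E_{π_λ^ψ}[|h|], E_π[|h|] }. -/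

import Mathlib

open scoped RealInnerProductSpace ENNReal
open MeasureTheory

/-- The Bregman divergence associated with a differentiable function `ψ`. -/
noncomputable def bregmanDiv {d : ℕ} (ψ : EuclideanSpace ℝ (Fin d) → ℝ)
    (x y : EuclideanSpace ℝ (Fin d)) : ℝ :=
  ψ x - ψ y - ⟪gradient ψ y, x - y⟫

/-- The left Bregman–Moreau envelope of `g` associated with `ψ`. -/
noncomputable def leftEnv {d : ℕ} (ψ g : EuclideanSpace ℝ (Fin d) → ℝ) (lam : ℝ)
    (x : EuclideanSpace ℝ (Fin d)) : ℝ :=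
  ⨅ y : EuclideanSpace ℝ (Fin d), (g y + (1 / lam) * bregmanDiv ψ y x)

/-- The right Bregman–Moreau envelope of `g` associated with `ψ`. -/
noncomputable def rightEnv {d : ℕ} (ψ g : EuclideanSpace ℝ (Fin d) → ℝ) (lam : ℝ)
    (x : EuclideanSpace ℝ (Fin d)) : ℝ :=
  ⨅ y : EuclideanSpace ℝ (Fin d), (g y + (1 / lam) * bregmanDiv ψ x y)

/-!
Strong convexity gives `ρ / 2 * ‖x - y‖ ^ 2 ≤ D_ψ(x, y)`, so by Young's inequality the penalty
compensates the Lipschitz variation of `g` up to `δ = λL² / (2ρ)`: both envelopes lie between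
`g - δ` and `g`. Hence `π_λ` is the exponential tilt of `π` by `g - env`, whose values lie in
`[0, δ]`. The density of a tilt by a function with values in `[a, b]` lies between `exp (a - b)` and
`exp (b - a)`, and the inverse tilt has the same property, so the two measures play symmetric roles.
-/

open scoped NNReal

section BregmanDivergence

variable {d : ℕ} {ψ : EuclideanSpace ℝ (Fin d) → ℝ}

theorem bregmanDiv_self (x : EuclideanSpace ℝ (Fin d)) : bregmanDiv ψ x x = 0 := by
  simp [bregmanDiv]

theorem mul_sq_dist_le_bregmanDiv {ρ : ℝ}
    (hsc : ∀ y ytil : EuclideanSpace ℝ (Fin d),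
      ψ ytil + ⟪gradient ψ ytil, y - ytil⟫ + ρ / 2 * ‖y - ytil‖ ^ 2 ≤ ψ y)
    (x y : EuclideanSpace ℝ (Fin d)) : ρ / 2 * dist x y ^ 2 ≤ bregmanDiv ψ x y := by
  rw [dist_eq_norm, bregmanDiv]
  linarith [hsc x y]

theorem continuous_bregmanDiv_left (hψ : Continuous ψ) (y : EuclideanSpace ℝ (Fin d)) :
    Continuous fun x => bregmanDiv ψ x y := by
  unfold bregmanDiv
  fun_prop

theorem measurable_bregmanDiv_right (hψ : Measurable ψ) (x : EuclideanSpace ℝ (Fin d)) :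
    Measurable fun y => bregmanDiv ψ x y := by
  have hgrad : Measurable (gradient ψ) :=
    (InnerProductSpace.toDual ℝ _).symm.continuous.measurable.comp (measurable_fderiv ℝ ψ)
  unfold bregmanDiv
  fun_prop

end BregmanDivergence

section MoreauEnvelope

/-- The Moreau envelope of `g` with parameter `lam` for an arbitrary penalty `D`, where `D x y` is
the cost of moving from `x` to `y`. It unifies the two Bregman envelopes: the left one has
`D x y = bregmanDiv ψ y x`, the right one `D x y = bregmanDiv ψ x y`. -/
noncomputable def moreauEnv {E : Type*} (D : E → E → ℝ) (g : E → ℝ) (lam : ℝ) (x : E) : ℝ :=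
  ⨅ y, (g y + (1 / lam) * D x y)

theorem leftEnv_eq_moreauEnv {d : ℕ} (ψ g : EuclideanSpace ℝ (Fin d) → ℝ) (lam : ℝ) :
    leftEnv ψ g lam = moreauEnv (fun x y => bregmanDiv ψ y x) g lam :=
  rfl

theorem rightEnv_eq_moreauEnv {d : ℕ} (ψ g : EuclideanSpace ℝ (Fin d) → ℝ) (lam : ℝ) :
    rightEnv ψ g lam = moreauEnv (bregmanDiv ψ) g lam :=
  rfl

theorem mul_le_add_mul_sq {ρ lam : ℝ} (hρ : 0 < ρ) (hlam : 0 < lam) (L t : ℝ) :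
    L * t ≤ lam * L ^ 2 / (2 * ρ) + (1 / lam) * (ρ / 2 * t ^ 2) := by
  have hsq : lam * L ^ 2 / (2 * ρ) + (1 / lam) * (ρ / 2 * t ^ 2) - L * t
      = (lam * L - ρ * t) ^ 2 / (2 * ρ * lam) := by
    field_simp
    ring
  have hnonneg : 0 ≤ (lam * L - ρ * t) ^ 2 / (2 * ρ * lam) := by positivity
  linarith

section Bounds

variable {E : Type*} [PseudoMetricSpace E] {D : E → E → ℝ} {g : E → ℝ} {K : ℝ≥0} {ρ lam : ℝ}

theorem sub_le_add_mul_penalty (hρ : 0 < ρ) (hlam : 0 < lam) (hg : LipschitzWith K g)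
    (hD : ∀ x y, ρ / 2 * dist x y ^ 2 ≤ D x y) (x y : E) :
    g x - lam * K ^ 2 / (2 * ρ) ≤ g y + (1 / lam) * D x y := by
  have hlip : g x - g y ≤ K * dist x y := (le_abs_self _).trans (hg.dist_le_mul x y)
  have hyoung := mul_le_add_mul_sq hρ hlam K (dist x y)
  have hpen : (1 / lam) * (ρ / 2 * dist x y ^ 2) ≤ (1 / lam) * D x y := by
    gcongr
    exact hD x y
  linarith

theorem bddBelow_range_add_mul_penalty (hρ : 0 < ρ) (hlam : 0 < lam) (hg : LipschitzWith K g)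
    (hD : ∀ x y, ρ / 2 * dist x y ^ 2 ≤ D x y) (x : E) :
    BddBelow (Set.range fun y => g y + (1 / lam) * D x y) :=
  ⟨_, Set.forall_mem_range.2 (sub_le_add_mul_penalty hρ hlam hg hD x)⟩

theorem sub_moreauEnv_mem_Icc (hρ : 0 < ρ) (hlam : 0 < lam) (hg : LipschitzWith K g)
    (hD : ∀ x y, ρ / 2 * dist x y ^ 2 ≤ D x y) (hD_self : ∀ x, D x x = 0) (x : E) :
    g x - moreauEnv D g lam x ∈ Set.Icc 0 (lam * K ^ 2 / (2 * ρ)) := by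
  have : Nonempty E := ⟨x⟩
  have hlower : g x - lam * K ^ 2 / (2 * ρ) ≤ moreauEnv D g lam x :=
    le_ciInf (sub_le_add_mul_penalty hρ hlam hg hD x)
  have hupper : moreauEnv D g lam x ≤ g x :=
    calc moreauEnv D g lam x ≤ g x + (1 / lam) * D x x :=
          ciInf_le (bddBelow_range_add_mul_penalty hρ hlam hg hD x) x
      _ = g x := by rw [hD_self, mul_zero, add_zero]
  exact ⟨sub_nonneg.2 hupper, sub_le_comm.1 hlower⟩

end Bounds

section Measurability

variable {E : Type*} [TopologicalSpace E] [MeasurableSpace E] {D : E → E → ℝ} {g : E → ℝ} {lam : ℝ}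

theorem measurable_moreauEnv_of_continuous_right [TopologicalSpace.SeparableSpace E]
    (hg : Continuous g) (hm : ∀ y, Measurable fun x => D x y) (hc : ∀ x, Continuous (D x)) :
    Measurable (moreauEnv D g lam) := by
  obtain ⟨S, hS_countable, hS_dense⟩ := TopologicalSpace.exists_countable_dense E
  have := hS_countable.to_subtype
  have hrestrict : moreauEnv D g lam = fun x => ⨅ y : S, (g y + (1 / lam) * D x y) := by
    funext x
    exact (hS_dense.ciInf' (hg.add ((hc x).const_mul _))).symm
  rw [hrestrict]
  exact .iInf fun y => ((hm y).const_mul _).const_add _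

theorem measurable_moreauEnv_of_continuous_left [OpensMeasurableSpace E]
    (hc : ∀ y, Continuous fun x => D x y)
    (hbdd : ∀ x, BddBelow (Set.range fun y => g y + (1 / lam) * D x y)) :
    Measurable (moreauEnv D g lam) :=
  (upperSemicontinuous_ciInf hbdd fun y =>
    (((hc y).const_mul _).const_add _).upperSemicontinuous).measurable

end Measurability

end MoreauEnvelope

section BregmanEnvelope

variable {d : ℕ} {ψ g : EuclideanSpace ℝ (Fin d) → ℝ} {K : ℝ≥0} {ρ lam : ℝ}

theorem sub_leftEnv_mem_Icc (hρ : 0 < ρ) (hlam : 0 < lam) (hg : LipschitzWith K g)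
    (hD : ∀ x y, ρ / 2 * dist x y ^ 2 ≤ bregmanDiv ψ x y) (x : EuclideanSpace ℝ (Fin d)) :
    g x - leftEnv ψ g lam x ∈ Set.Icc 0 (lam * K ^ 2 / (2 * ρ)) := by
  rw [leftEnv_eq_moreauEnv]
  have hD_flip (x y : EuclideanSpace ℝ (Fin d)) : ρ / 2 * dist x y ^ 2 ≤ bregmanDiv ψ y x := by
    rw [dist_comm]
    exact hD y x
  exact sub_moreauEnv_mem_Icc hρ hlam hg hD_flip bregmanDiv_self x

theorem sub_rightEnv_mem_Icc (hρ : 0 < ρ) (hlam : 0 < lam) (hg : LipschitzWith K g)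
    (hD : ∀ x y, ρ / 2 * dist x y ^ 2 ≤ bregmanDiv ψ x y) (x : EuclideanSpace ℝ (Fin d)) :
    g x - rightEnv ψ g lam x ∈ Set.Icc 0 (lam * K ^ 2 / (2 * ρ)) := by
  rw [rightEnv_eq_moreauEnv]
  exact sub_moreauEnv_mem_Icc hρ hlam hg hD bregmanDiv_self x

theorem measurable_leftEnv (hψ : Continuous ψ) (hg : Continuous g) :
    Measurable (leftEnv ψ g lam) := by
  rw [leftEnv_eq_moreauEnv]
  exact measurable_moreauEnv_of_continuous_right hg
    (measurable_bregmanDiv_right hψ.measurable) (continuous_bregmanDiv_left hψ)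

theorem measurable_rightEnv (hρ : 0 < ρ) (hlam : 0 < lam) (hψ : Continuous ψ)
    (hg : LipschitzWith K g) (hD : ∀ x y, ρ / 2 * dist x y ^ 2 ≤ bregmanDiv ψ x y) :
    Measurable (rightEnv ψ g lam) := by
  rw [rightEnv_eq_moreauEnv]
  exact measurable_moreauEnv_of_continuous_left (continuous_bregmanDiv_left hψ)
    (bddBelow_range_add_mul_penalty hρ hlam hg hD)

end BregmanEnvelope

section Tilting

variable {X : Type*} [MeasurableSpace X] {μ : Measure X} {φ : X → ℝ} {a b : ℝ}

theorem withDensity_exp_div_lintegral_eq_tilted [NeZero μ]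
    (hφ : Integrable (fun x => Real.exp (φ x)) μ) :
    μ.withDensity (fun x => ENNReal.ofReal (Real.exp (φ x)) /
      ∫⁻ y, ENNReal.ofReal (Real.exp (φ y)) ∂μ) = μ.tilted φ := by
  have hZ : 0 < ∫ x, Real.exp (φ x) ∂μ := integral_exp_pos hφ
  have hlintegral : ∫⁻ x, ENNReal.ofReal (Real.exp (φ x)) ∂μ
      = ENNReal.ofReal (∫ x, Real.exp (φ x) ∂μ) :=
    (ofReal_integral_eq_lintegral_ofReal hφ (.of_forall fun _ => (Real.exp_pos _).le)).symm
  simp only [hlintegral, ← ENNReal.ofReal_div_of_pos hZ, Measure.tilted]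

theorem integrable_exp_of_mem_Icc [IsFiniteMeasure μ] (hφ : AEMeasurable φ μ)
    (hab : ∀ᵐ x ∂μ, φ x ∈ Set.Icc a b) : Integrable (fun x => Real.exp (φ x)) μ := by
  simpa only [one_mul] using ProbabilityTheory.integrable_exp_mul_of_mem_Icc (t := 1) hφ hab

theorem integral_exp_mem_Icc [IsProbabilityMeasure μ] (hφ : AEMeasurable φ μ)
    (hab : ∀ᵐ x ∂μ, φ x ∈ Set.Icc a b) :
    ∫ x, Real.exp (φ x) ∂μ ∈ Set.Icc (Real.exp a) (Real.exp b) := by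
  have hint := integrable_exp_of_mem_Icc hφ hab
  constructor
  · simpa using integral_mono_ae (integrable_const _) hint
      (hab.mono fun _ hx => Real.exp_le_exp.2 hx.1)
  · simpa using integral_mono_ae hint (integrable_const _)
      (hab.mono fun _ hx => Real.exp_le_exp.2 hx.2)

theorem abs_exp_sub_one_le_exp_sub_one {s t : ℝ} (h : |s| ≤ t) :
    |Real.exp s - 1| ≤ Real.exp t - 1 := by
  obtain ⟨hlower, hupper⟩ := abs_le.1 h
  have hcosh : 1 ≤ (Real.exp t + Real.exp (-t)) / 2 := Real.cosh_eq t ▸ Real.one_le_cosh t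
  rw [abs_le]
  constructor <;> linarith [Real.exp_le_exp.2 hlower, Real.exp_le_exp.2 hupper]

theorem abs_exp_div_integral_exp_sub_one_le [IsProbabilityMeasure μ] (hφ : AEMeasurable φ μ)
    (hab : ∀ᵐ x ∂μ, φ x ∈ Set.Icc a b) :
    ∀ᵐ x ∂μ, |Real.exp (φ x) / (∫ y, Real.exp (φ y) ∂μ) - 1| ≤ Real.exp (b - a) - 1 := by
  obtain ⟨hZa, hZb⟩ := integral_exp_mem_Icc hφ hab
  set Z := ∫ y, Real.exp (φ y) ∂μ
  have hZ : 0 < Z := (Real.exp_pos a).trans_le hZa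
  have hlogZ : Real.log Z ∈ Set.Icc a b :=
    ⟨(Real.le_log_iff_exp_le hZ).2 hZa, (Real.log_le_iff_le_exp hZ).2 hZb⟩
  filter_upwards [hab] with x hx
  have hdensity : Real.exp (φ x) / Z = Real.exp (φ x - Real.log Z) := by
    rw [Real.exp_sub, Real.exp_log hZ]
  rw [hdensity]
  exact abs_exp_sub_one_le_exp_sub_one (Real.dist_le_of_mem_Icc hx hlogZ)

variable {F : Type*} [NormedAddCommGroup F] [NormedSpace ℝ F] {h : X → F}

theorem integrable_exp_smul_of_mem_Icc (hφ : AEMeasurable φ μ)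
    (hab : ∀ᵐ x ∂μ, φ x ∈ Set.Icc a b) (hh : Integrable h μ) :
    Integrable (fun x => Real.exp (φ x) • h x) μ :=
  hh.bdd_smul (Real.exp b) hφ.exp.aestronglyMeasurable <| hab.mono fun x hx => by
    simpa only [Real.norm_eq_abs, Real.abs_exp, Real.exp_le_exp] using hx.2

theorem norm_integral_tilted_sub_integral_le [IsProbabilityMeasure μ] (hφ : AEMeasurable φ μ)
    (hab : ∀ᵐ x ∂μ, φ x ∈ Set.Icc a b) (hh : Integrable h μ) :
    ‖∫ x, h x ∂(μ.tilted φ) - ∫ x, h x ∂μ‖ ≤ (Real.exp (b - a) - 1) * ∫ x, ‖h x‖ ∂μ := by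
  set Z := ∫ y, Real.exp (φ y) ∂μ with hZ
  have hint : Integrable (fun x => (Real.exp (φ x) / Z) • h x) μ := by
    simpa only [div_eq_inv_mul, mul_smul] using
      (integrable_exp_smul_of_mem_Icc hφ hab hh).fun_smul Z⁻¹
  have hdiff : ∫ x, h x ∂(μ.tilted φ) - ∫ x, h x ∂μ
      = ∫ x, (Real.exp (φ x) / Z - 1) • h x ∂μ := by
    simp only [integral_tilted, ← hZ, sub_smul, one_smul, integral_sub hint hh]
  rw [hdiff, ← integral_const_mul]
  refine norm_integral_le_of_norm_le (hh.norm.const_mul _) ?_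
  filter_upwards [abs_exp_div_integral_exp_sub_one_le hφ hab] with x hx
  rw [norm_smul, Real.norm_eq_abs]
  gcongr

theorem norm_integral_sub_integral_tilted_le [IsProbabilityMeasure μ] (hφ : AEMeasurable φ μ)
    (hab : ∀ᵐ x ∂μ, φ x ∈ Set.Icc a b) (hh : Integrable h μ) :
    ‖∫ x, h x ∂μ - ∫ x, h x ∂(μ.tilted φ)‖
      ≤ (Real.exp (b - a) - 1) * ∫ x, ‖h x‖ ∂(μ.tilted φ) := by
  have hexp := integrable_exp_of_mem_Icc hφ hab
  have := isProbabilityMeasure_tilted hexp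
  have hac := tilted_absolutelyContinuous μ φ
  have hneg : ∀ᵐ x ∂(μ.tilted φ), (-φ) x ∈ Set.Icc (-b) (-a) :=
    hac.ae_le (hab.mono fun _ hx => ⟨neg_le_neg hx.2, neg_le_neg hx.1⟩)
  have hh' : Integrable h (μ.tilted φ) :=
    (integrable_tilted_iff hexp h).2 (integrable_exp_smul_of_mem_Icc hφ hab hh)
  have hbound := norm_integral_tilted_sub_integral_le (hφ.mono_ac hac).neg hneg hh'
  rwa [tilted_neg_same hexp, neg_sub_neg] at hbound

theorem norm_integral_tilted_sub_integral_le_min [IsProbabilityMeasure μ] (hφ : AEMeasurable φ μ)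
    (hab : ∀ᵐ x ∂μ, φ x ∈ Set.Icc a b) (hh : Integrable h μ) :
    ‖∫ x, h x ∂(μ.tilted φ) - ∫ x, h x ∂μ‖
      ≤ (Real.exp (b - a) - 1) * min (∫ x, ‖h x‖ ∂(μ.tilted φ)) (∫ x, ‖h x‖ ∂μ) := by
  rcases min_choice (∫ x, ‖h x‖ ∂(μ.tilted φ)) (∫ x, ‖h x‖ ∂μ) with hmin | hmin <;> rw [hmin]
  · exact norm_sub_rev (∫ x, h x ∂μ) _ ▸ norm_integral_sub_integral_tilted_le hφ hab hh
  · exact norm_integral_tilted_sub_integral_le hφ hab hh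

theorem integrable_exp_add_of_mem_Icc {V : X → ℝ} (hV : Integrable (fun x => Real.exp (V x)) μ)
    (hφ : AEMeasurable φ μ) (hab : ∀ᵐ x ∂μ, φ x ∈ Set.Icc a b) :
    Integrable (fun x => Real.exp ((V + φ) x)) μ := by
  simpa only [Pi.add_apply, Real.exp_add, mul_comm, smul_eq_mul] using
    integrable_exp_smul_of_mem_Icc hφ hab hV

end Tilting

theorem stmt8_general {d : ℕ} {μ : Measure (EuclideanSpace ℝ (Fin d))} {ρ : ℝ} (hρ : 0 < ρ)
    {ψ : EuclideanSpace ℝ (Fin d) → ℝ} (hdiff : Differentiable ℝ ψ)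
    (hsc : ∀ y ytil : EuclideanSpace ℝ (Fin d),
      ψ ytil + ⟪gradient ψ ytil, y - ytil⟫ + ρ / 2 * ‖y - ytil‖ ^ 2 ≤ ψ y)
    {L : ℝ≥0} {g : EuclideanSpace ℝ (Fin d) → ℝ} (hg : LipschitzWith L g)
    {f : EuclideanSpace ℝ (Fin d) → ℝ} (hf : AEMeasurable f μ)
    (hpos : 0 < ∫⁻ x, ENNReal.ofReal (Real.exp (-(f x + g x))) ∂μ)
    (hfin : (∫⁻ x, ENNReal.ofReal (Real.exp (-(f x + g x))) ∂μ) < ∞)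
    {lam : ℝ} (hlam : 0 < lam) {env : EuclideanSpace ℝ (Fin d) → ℝ}
    (henv : env = leftEnv ψ g lam ∨ env = rightEnv ψ g lam)
    {π πlam : Measure (EuclideanSpace ℝ (Fin d))}
    (hπ : π = μ.withDensity fun x =>
      ENNReal.ofReal (Real.exp (-(f x + g x))) /
        ∫⁻ y, ENNReal.ofReal (Real.exp (-(f y + g y))) ∂μ)
    (hπlam : πlam = μ.withDensity fun x =>
      ENNReal.ofReal (Real.exp (-(f x + env x))) /
        ∫⁻ y, ENNReal.ofReal (Real.exp (-(f y + env y))) ∂μ)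
    {F : Type*} [NormedAddCommGroup F] [NormedSpace ℝ F]
    {h : EuclideanSpace ℝ (Fin d) → F} (hh : Integrable h π) :
    ‖(∫ x, h x ∂πlam) - ∫ x, h x ∂π‖ ≤
      (Real.exp (lam * L ^ 2 / (2 * ρ)) - 1) * min (∫ x, ‖h x‖ ∂πlam) (∫ x, ‖h x‖ ∂π) := by
  have hD := mul_sq_dist_le_bregmanDiv hsc
  have henv_bounds (x) : g x - env x ∈ Set.Icc 0 (lam * L ^ 2 / (2 * ρ)) := by
    rcases henv with rfl | rfl
    exacts [sub_leftEnv_mem_Icc hρ hlam hg hD x, sub_rightEnv_mem_Icc hρ hlam hg hD x]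
  have henv_meas : Measurable env := by
    rcases henv with rfl | rfl
    exacts [measurable_leftEnv hdiff.continuous hg.continuous,
      measurable_rightEnv hρ hlam hdiff.continuous hg hD]
  have : NeZero μ := ⟨by rintro rfl; simp at hpos⟩
  have hφ : Measurable (g - env) := hg.continuous.measurable.sub henv_meas
  have hV : Integrable (fun x => Real.exp (-(f x + g x))) μ :=
    (lintegral_ofReal_ne_top_iff_integrable
      (hf.add hg.continuous.measurable.aemeasurable).neg.exp.aestronglyMeasurable
      (.of_forall fun _ => (Real.exp_pos _).le)).1 hfin.ne
  have hW := integrable_exp_add_of_mem_Icc hV hφ.aemeasurable (.of_forall henv_bounds)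
  have hsum : (fun x => -(f x + g x)) + (g - env) = fun x => -(f x + env x) := by
    ext x
    simp only [Pi.add_apply, Pi.sub_apply]
    ring
  rw [hsum] at hW
  rw [withDensity_exp_div_lintegral_eq_tilted hV] at hπ
  rw [withDensity_exp_div_lintegral_eq_tilted hW, ← hsum, ← tilted_tilted hV, ← hπ] at hπlam
  have : IsProbabilityMeasure π := hπ ▸ isProbabilityMeasure_tilted hV
  simpa only [hπlam, sub_zero] using
    norm_integral_tilted_sub_integral_le_min hφ.aemeasurable (.of_forall henv_bounds) hh

/-- For `h` integrable w.r.t. both Gibbs measures,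
`|E_{π_λ^ψ}[h] − E_π[h]| ≤ (e^{λL²/ρ} − 1)·min{E_{π_λ^ψ}[|h|], E_π[|h|]}`. -/
theorem stmt8 {d : ℕ} (ρ : ℝ) (hρ : 0 < ρ)
    (ψ : EuclideanSpace ℝ (Fin d) → ℝ)
    (hdiff : Differentiable ℝ ψ)
    (hsc : ∀ y ytil : EuclideanSpace ℝ (Fin d),
      ψ ytil + ⟪gradient ψ ytil, y - ytil⟫ + ρ / 2 * ‖y - ytil‖ ^ 2 ≤ ψ y)
    (L : ℝ) (hL : 0 ≤ L)
    (g : EuclideanSpace ℝ (Fin d) → ℝ)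
    (hg : ∀ x y, |g x - g y| ≤ L * ‖x - y‖)
    (f : EuclideanSpace ℝ (Fin d) → ℝ) (hf : Measurable f)
    (hpos : 0 < ∫⁻ x, ENNReal.ofReal (Real.exp (-(f x + g x))))
    (hfin : (∫⁻ x, ENNReal.ofReal (Real.exp (-(f x + g x)))) < ∞)
    (lam : ℝ) (hlam : 0 < lam)
    (env : EuclideanSpace ℝ (Fin d) → ℝ)
    (henv : env = leftEnv ψ g lam ∨ env = rightEnv ψ g lam)
    (π πlam : Measure (EuclideanSpace ℝ (Fin d)))
    (hπ : π = volume.withDensity fun x =>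
      ENNReal.ofReal (Real.exp (-(f x + g x))) /
        ∫⁻ y, ENNReal.ofReal (Real.exp (-(f y + g y))))
    (hπlam : πlam = volume.withDensity fun x =>
      ENNReal.ofReal (Real.exp (-(f x + env x))) /
        ∫⁻ y, ENNReal.ofReal (Real.exp (-(f y + env y)))) :
    ∀ h : EuclideanSpace ℝ (Fin d) → ℝ, Measurable h →
      Integrable h π → Integrable h πlam →
      |(∫ x, h x ∂πlam) - ∫ x, h x ∂π| ≤
        (Real.exp (lam * L ^ 2 / ρ) - 1) *
          min (∫ x, |h x| ∂πlam) (∫ x, |h x| ∂π) := by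
  intro h _ hhπ _
  lift L to ℝ≥0 using hL
  refine (stmt8_general hρ hdiff hsc (lipschitzWith_iff_norm_sub_le.2 hg)
    hf.aemeasurable hpos hfin hlam henv hπ hπlam hhπ).trans ?_
  simp only [Real.norm_eq_abs]
  gcongr
  linarith
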